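/- For the Weierstrass ℘-function with period lattice L_ω = ω·ℤ[τ] satisfying ℘′(z)² = 4℘(z)³ − 1, one has ℘′(√−3·ω/6, L_ω) = −3·√−1. -/

import Mathlib

/-!
Let `c = √−3·ω/3` and `z₀ = c/2`. The symmetry of `L_ω` under multiplication by `τ` gives `g₂ = 0`,
and also `℘(c) = 0` because `τc ≡ c` modulo `L_ω`. Hence `℘″ = 6℘²` vanishes doubly at `c`, so
`℘′ − ℘′(c)` vanishes there to order at least three. In the product
`(℘′(z + c) − ℘′(c)) (℘′(z) + ℘′(c))` each triple pole of one factor is therefore cancelled by a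
zero of the other, and Liouville's theorem makes the product constant. Since `3c ∈ L_ω`, its value
at `z = c` is `−4℘′(c)²`; since `z₀ + c` is a half period, its value at `z₀` is
`−℘′(c) (℘′(z₀) + ℘′(c))`. Comparing the two gives `℘′(z₀) = 3℘′(c)`.

The differential equation at `c` determines `℘′(c)²`. The sign of `℘′(c)` comes from complex
conjugation: on the imaginary axis `℘` is real and `℘′` is purely imaginary, so
`t ↦ Im ℘′(it)` has derivative `6℘(it)² ≥ 0` and increases to its zero at the half period.
-/

noncomputable section

open Complex Real ComplexConjugate

/-- `τ = (−1+√−3)/2`, a primitive cube root of unity. -/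
def tau : ℂ := (-1 + Real.sqrt 3 * Complex.I) / 2

/-- `√−3 = 1 + 2τ`, the square root of `−3` with positive imaginary part. -/
def sqrtm3 : ℂ := Real.sqrt 3 * Complex.I

/-- The ring of integers `O_K = ℤ[τ]` of `K = ℚ(√−3)`, as a subring of `ℂ`. -/
def Eis : Subring ℂ := Subring.closure {tau}

/-- `τ` as an element of `ℤ[τ]`. -/
def tauO : Eis := ⟨tau, Subring.subset_closure rfl⟩

/-- `√−3` as an element of `ℤ[τ]`. -/
def sqrtm3O : Eis := 1 + 2 * tauO

/-- Membership in the lattice `L_ω = ω·ℤ[τ]`. -/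
def inLattice (ω : ℝ) (z : ℂ) : Prop := ∃ a : Eis, z = (ω : ℂ) * a

/-- The Weierstrass `℘`-function of the lattice `L_ω = ω·ℤ[τ]`. -/
def wp (ω : ℝ) (z : ℂ) : ℂ :=
  1 / z ^ 2 + ∑' a : {w : ℂ // inLattice ω w ∧ w ≠ 0},
    (1 / (z - (a : ℂ)) ^ 2 - 1 / (a : ℂ) ^ 2)

/-- The Weierstrass `ζ`-function of the lattice `L_ω = ω·ℤ[τ]`. -/
def wzeta (ω : ℝ) (z : ℂ) : ℂ :=
  1 / z + ∑' a : {w : ℂ // inLattice ω w ∧ w ≠ 0},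
    (1 / (z - (a : ℂ)) + 1 / (a : ℂ) + z / (a : ℂ) ^ 2)

/-- The real cube root of 2, as a complex number. -/
def cbrt2 : ℂ := ((2 : ℝ) ^ ((1 : ℝ) / 3) : ℝ)

/-- The real cube root of 4, as a complex number. -/
def cbrt4 : ℂ := ((4 : ℝ) ^ ((1 : ℝ) / 3) : ℝ)

open Set Filter Topology
open scoped PeriodPair

theorem eq_of_meromorphicOrderAt_nonneg_of_periodic {E : Type*} [NormedAddCommGroup E]
    [NormedSpace ℂ E] {Λ : Submodule ℤ ℂ} [DiscreteTopology Λ] [IsZLattice ℝ Λ] {f : ℂ → E}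
    (hf : Meromorphic f) (hper : ∀ z, ∀ l ∈ Λ, f (z + l) = f z)
    (hord : ∀ z, 0 ≤ meromorphicOrderAt f z) {x y : ℂ} (hx : AnalyticAt ℂ f x)
    (hy : AnalyticAt ℂ f y) : f x = f y := by
  set F := toMeromorphicNFOn f univ
  have hf' : MeromorphicOn f univ := fun z _ ↦ hf z
  have hFf : ∀ z, F =ᶠ[𝓝[≠] z] f := fun z ↦ hf'.toMeromorphicNFOn_eq_self_on_nhdsNE (mem_univ z)
  have hF_an : ∀ z, AnalyticAt ℂ F z := fun z ↦ by
    rw [← (meromorphicNFOn_toMeromorphicNFOn f univ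
      (mem_univ z)).meromorphicOrderAt_nonneg_iff_analyticAt, meromorphicOrderAt_congr (hFf z)]
    exact hord z
  have hF_eq : ∀ {z}, AnalyticAt ℂ f z → F z = f z := fun {z} hz ↦
    ((hF_an z).continuousAt.eventuallyEq_nhds_iff_eventuallyEq_nhdsNE hz.continuousAt).1
      (hFf z) |>.eq_of_nhds
  have hF_per : ∀ z, ∀ l ∈ Λ, F (z + l) = F z := fun z l hl ↦ by
    have hcont : ContinuousAt (fun w ↦ F (w + l)) z :=
      (hF_an (z + l)).continuousAt.comp (f := fun w ↦ w + l) (by fun_prop)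
    have hev : (fun w ↦ F (w + l)) =ᶠ[𝓝[≠] z] F := by
      have hshift : Tendsto (fun w ↦ w + l) (𝓝[≠] z) (𝓝[≠] (z + l)) :=
        (by fun_prop : ContinuousAt (fun w ↦ w + l) z).continuousWithinAt.tendsto_nhdsWithin
          fun w hw ↦ by simpa using hw
      filter_upwards [hshift.eventually (hFf (z + l)), hFf z] with w h₁ h₂
      rw [h₁, h₂, hper w l hl]
    exact ((hcont.eventuallyEq_nhds_iff_eventuallyEq_nhdsNE
      (hF_an z).continuousAt).1 hev).eq_of_nhds
  have hF_diff : Differentiable ℂ F := fun z ↦ (hF_an z).differentiableAt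
  rw [← hF_eq hx, ← hF_eq hy]
  exact hF_diff.apply_eq_apply_of_bounded
    (IsZLattice.isCompact_range_of_periodic Λ F hF_diff.continuous hF_per).isBounded x y

section PeriodPair

variable {L : PeriodPair}

theorem hasDerivAt_weierstrassP {z : ℂ} (hz : z ∉ L.lattice) : HasDerivAt ℘[L] (℘'[L] z) z := by
  rw [← L.deriv_weierstrassP]
  exact (L.analyticOnNhd_weierstrassP z hz).differentiableAt.hasDerivAt

variable (L) in
theorem meromorphicOrderAt_derivWeierstrassP {l : ℂ} (hl : l ∈ L.lattice) :
    meromorphicOrderAt ℘'[L] l = -3 := by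
  rw [← L.deriv_weierstrassP]
  exact meromorphicOrderAt_deriv_eq_sub_one (n := -2) (by simp) (L.order_weierstrassP l hl)

variable (L) in
theorem isPreconnected_compl_lattice : IsPreconnected (L.lattice : Set ℂ)ᶜ :=
  (Set.Countable.isConnected_compl_of_one_lt_rank (by simp)
    (countable_of_Lindelof_of_discrete (X := L.lattice))).isPreconnected

theorem not_eqOn_derivWeierstrassP_zero : ¬ EqOn ℘'[L] 0 (L.lattice : Set ℂ)ᶜ := by
  intro h
  have hev : ℘'[L] =ᶠ[𝓝[≠] 0] 0 := by
    filter_upwards [nhdsWithin_le_nhds (L.compl_lattice_sdiff_singleton_mem_nhds 0),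
      self_mem_nhdsWithin] with z hz hz0
    exact h fun hzL ↦ hz ⟨hzL, hz0⟩
  exact WithTop.coe_ne_top (a := (-3 : ℤ)) <|
    (meromorphicOrderAt_derivWeierstrassP L (zero_mem _)).symm.trans
      (meromorphicOrderAt_eq_top_iff.2 hev)

theorem hasDerivAt_derivWeierstrassP {z : ℂ} (hz : z ∉ L.lattice) :
    HasDerivAt ℘'[L] (6 * ℘[L] z ^ 2 - L.g₂ / 2) z := by
  have hderiv : ∀ w ∉ L.lattice, HasDerivAt ℘'[L] (deriv ℘'[L] w) w := fun w hw ↦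
    (L.analyticOnNhd_derivWeierstrassP w hw).differentiableAt.hasDerivAt
  have hprod : ∀ w ∈ (L.lattice : Set ℂ)ᶜ,
      ℘'[L] w * (deriv ℘'[L] w - (6 * ℘[L] w ^ 2 - L.g₂ / 2)) = 0 := by
    intro w hw
    have hlhs := (hderiv w hw).fun_pow 2
    have hrhs := ((((hasDerivAt_weierstrassP hw).fun_pow 3).const_mul 4).fun_sub
      ((hasDerivAt_weierstrassP hw).const_mul L.g₂)).sub_const L.g₃
    have hev : (fun v ↦ ℘'[L] v ^ 2) =ᶠ[𝓝 w] fun v ↦ 4 * ℘[L] v ^ 3 - L.g₂ * ℘[L] v - L.g₃ := by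
      filter_upwards [L.isClosed_lattice.isOpen_compl.mem_nhds hw] with v hv
      exact L.derivWeierstrassP_sq v hv
    have huniq := hlhs.unique (hrhs.congr_of_eventuallyEq hev)
    norm_num at huniq
    linear_combination huniq / 2
  have hzero := (AnalyticOnNhd.eq_zero_or_eq_zero_of_mul_eq_zero
    L.analyticOnNhd_derivWeierstrassP (fun w hw ↦ ?_) hprod
    (isPreconnected_compl_lattice L)).resolve_left not_eqOn_derivWeierstrassP_zero
  · rw [← sub_eq_zero.1 (hzero z hz)]
    exact hderiv z hz
  · have h₁ := (L.analyticOnNhd_derivWeierstrassP w hw).deriv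
    have h₂ := L.analyticOnNhd_weierstrassP w hw
    fun_prop

theorem derivWeierstrassP_eq_zero_of_two_mul_mem {z : ℂ} (hz : 2 * z ∈ L.lattice) :
    ℘'[L] z = 0 := by
  have h := L.derivWeierstrassP_sub_coe z ⟨2 * z, hz⟩
  rwa [show z - 2 * z = -z by ring, L.derivWeierstrassP_neg, neg_eq_self] at h

theorem derivWeierstrassP_two_mul_of_three_mul_mem {z : ℂ} (hz : 3 * z ∈ L.lattice) :
    ℘'[L] (2 * z) = -℘'[L] z := by
  rw [← L.derivWeierstrassP_sub_coe _ ⟨3 * z, hz⟩, ← L.derivWeierstrassP_neg]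
  ring_nf

theorem analyticOrderAt_derivWeierstrassP_sub (hg₂ : L.g₂ = 0) {z : ℂ} (hz : z ∉ L.lattice) :
    analyticOrderAt (fun w ↦ ℘'[L] w - ℘'[L] z) z = 2 * analyticOrderAt ℘[L] z + 1 := by
  have hderiv : deriv ℘'[L] =ᶠ[𝓝 z] (fun _ ↦ 6) * ℘[L] ^ 2 := by
    filter_upwards [L.isClosed_lattice.isOpen_compl.mem_nhds hz] with w hw
    simp [(hasDerivAt_derivWeierstrassP hw).deriv, hg₂]
  have h℘ := L.analyticOnNhd_weierstrassP z hz
  have hsix : analyticOrderAt (fun _ : ℂ ↦ (6 : ℂ)) z = 0 :=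
    analyticAt_const.analyticOrderAt_eq_zero.2 (by norm_num)
  rw [← (L.analyticOnNhd_derivWeierstrassP z hz).analyticOrderAt_deriv_add_one,
    analyticOrderAt_congr hderiv, analyticOrderAt_mul analyticAt_const (h℘.pow 2),
    analyticOrderAt_pow h℘, hsix, zero_add, nsmul_eq_mul, Nat.cast_ofNat]

theorem analyticOrderAt_weierstrassP_ne_top {z : ℂ} (hz : z ∉ L.lattice) :
    analyticOrderAt ℘[L] z ≠ ⊤ := by
  intro htop
  have hzero : EqOn ℘[L] 0 (L.lattice : Set ℂ)ᶜ :=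
    L.analyticOnNhd_weierstrassP.eqOn_zero_of_preconnected_of_eventuallyEq_zero
      (isPreconnected_compl_lattice L) hz (analyticOrderAt_eq_top.1 htop)
  refine not_eqOn_derivWeierstrassP_zero (L := L) fun w hw ↦ ?_
  have hev : ℘[L] =ᶠ[𝓝 w] fun _ ↦ 0 := hzero.eventuallyEq_of_mem
    (L.isClosed_lattice.isOpen_compl.mem_nhds hw)
  rw [← L.deriv_weierstrassP, hev.deriv_eq, deriv_const, Pi.zero_apply]

theorem derivWeierstrassP_ne_zero_of_weierstrassP_eq_zero (hg₂ : L.g₂ = 0) {z : ℂ}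
    (hz : z ∉ L.lattice) (h0 : ℘[L] z = 0) : ℘'[L] z ≠ 0 := by
  intro h0'
  have hord' := analyticOrderAt_derivWeierstrassP_sub hg₂ hz
  have hord := (L.analyticOnNhd_weierstrassP z hz).analyticOrderAt_deriv_add_one
  simp only [h0', sub_zero] at hord'
  simp only [L.deriv_weierstrassP, h0, sub_zero, hord'] at hord
  obtain ⟨n, hn⟩ := ENat.ne_top_iff_exists.1 (analyticOrderAt_weierstrassP_ne_top hz)
  rw [← hn] at hord
  -- Were `℘′ z = 0` too, the order `n` of `℘` at `z` would satisfy `2 * n + 1 + 1 = n`.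
  norm_cast at hord
  omega

theorem three_le_meromorphicOrderAt_derivWeierstrassP_sub (hg₂ : L.g₂ = 0) {z : ℂ}
    (hz : z ∉ L.lattice) (h0 : ℘[L] z = 0) :
    3 ≤ meromorphicOrderAt (fun w ↦ ℘'[L] w - ℘'[L] z) z := by
  have hord : 1 ≤ analyticOrderAt ℘[L] z :=
    Order.one_le_iff_ne_zero.2 ((L.analyticOnNhd_weierstrassP z hz).analyticOrderAt_ne_zero.2 h0)
  have hle : 3 ≤ analyticOrderAt (fun w ↦ ℘'[L] w - ℘'[L] z) z := calc
    (3 : ℕ∞) = 2 * 1 + 1 := by norm_num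
    _ ≤ 2 * analyticOrderAt ℘[L] z + 1 := by gcongr
    _ = _ := (analyticOrderAt_derivWeierstrassP_sub hg₂ hz).symm
  rw [((L.analyticOnNhd_derivWeierstrassP z hz).fun_sub analyticAt_const).meromorphicOrderAt_eq]
  exact ENat.map_natCast_strictMono.monotone hle

theorem neg_three_le_meromorphicOrderAt_derivWeierstrassP_sub (z a : ℂ) :
    -3 ≤ meromorphicOrderAt (fun w ↦ ℘'[L] w - a) z := by
  by_cases hz : z ∈ L.lattice
  · have hconst : 0 ≤ meromorphicOrderAt (fun _ : ℂ ↦ -a) z :=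
      analyticAt_const.meromorphicOrderAt_nonneg
    have hadd := meromorphicOrderAt_add (L.meromorphic_derivWeierstrassP z)
      (MeromorphicAt.const (-a) z)
    rw [meromorphicOrderAt_derivWeierstrassP L hz] at hadd
    simp only [sub_eq_add_neg]
    exact (le_min le_rfl (le_trans (by decide) hconst)).trans hadd
  · exact le_trans (by decide) ((L.analyticOnNhd_derivWeierstrassP z hz).fun_sub
      analyticAt_const).meromorphicOrderAt_nonneg

theorem meromorphicOrderAt_derivWeierstrassP_add_sub_mul_sub_nonneg (hg₂ : L.g₂ = 0) {c : ℂ}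
    (hc : c ∉ L.lattice) (h0 : ℘[L] c = 0) (z : ℂ) :
    0 ≤ meromorphicOrderAt (fun w ↦ (℘'[L] (w + c) - ℘'[L] c) * (℘'[L] w - ℘'[L] (-c))) z := by
  have hmer (a x : ℂ) : MeromorphicAt (fun w ↦ ℘'[L] w - a) x :=
    (L.meromorphic_derivWeierstrassP x).fun_sub (.const a x)
  have hshift : meromorphicOrderAt (fun w ↦ ℘'[L] (w + c) - ℘'[L] c) z =
      meromorphicOrderAt (fun w ↦ ℘'[L] w - ℘'[L] c) (z + c) :=
    meromorphicOrderAt_fun_comp_add_const_eq_meromorphicOrderAt (f := fun w ↦ ℘'[L] w - ℘'[L] c)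
  rw [fun_meromorphicOrderAt_mul (meromorphicAt_fun_comp_add_const_iff_meromorphicAt.2
    (hmer (℘'[L] c) (z + c))) (hmer _ z), hshift]
  have hzero {a x : ℂ} (ha : a ∉ L.lattice) (ha0 : ℘[L] a = 0) (hx : x - a ∈ L.lattice) :
      3 ≤ meromorphicOrderAt (fun w ↦ ℘'[L] w - ℘'[L] a) x := by
    obtain ⟨l, rfl⟩ : ∃ l : L.lattice, x = a + l := ⟨⟨_, hx⟩, by simp⟩
    rw [← L.derivWeierstrassP_add_coe a l]
    exact three_le_meromorphicOrderAt_derivWeierstrassP_sub hg₂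
      (fun h ↦ ha (by simpa using sub_mem h l.2)) (by simpa using ha0)
  have hpole := neg_three_le_meromorphicOrderAt_derivWeierstrassP_sub (L := L)
  by_cases hz : z ∈ L.lattice
  · exact add_le_add (hzero (x := z + c) hc h0 (by simpa)) (hpole z _)
  by_cases hzc : z + c ∈ L.lattice
  · exact add_le_add (hpole (z + c) _)
      (hzero (x := z) (a := -c) (by simpa) (by simpa) (by simpa))
  · exact add_nonneg
      ((L.analyticOnNhd_derivWeierstrassP _ hzc).fun_sub analyticAt_const).meromorphicOrderAt_nonneg
      ((L.analyticOnNhd_derivWeierstrassP z hz).fun_sub analyticAt_const).meromorphicOrderAt_nonneg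

theorem derivWeierstrassP_add_sub_mul_sub_eq (hg₂ : L.g₂ = 0) {c z w : ℂ} (hc : c ∉ L.lattice)
    (h0 : ℘[L] c = 0) (hz : z ∉ L.lattice) (hzc : z + c ∉ L.lattice) (hw : w ∉ L.lattice)
    (hwc : w + c ∉ L.lattice) :
    (℘'[L] (z + c) - ℘'[L] c) * (℘'[L] z - ℘'[L] (-c)) =
      (℘'[L] (w + c) - ℘'[L] c) * (℘'[L] w - ℘'[L] (-c)) := by
  have han {x : ℂ} (hx : x ∉ L.lattice) (hxc : x + c ∉ L.lattice) :
      AnalyticAt ℂ (fun v ↦ (℘'[L] (v + c) - ℘'[L] c) * (℘'[L] v - ℘'[L] (-c))) x :=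
    (((L.analyticOnNhd_derivWeierstrassP _ hxc).fun_comp (f := fun v ↦ v + c) (by fun_prop)).fun_sub
      analyticAt_const).fun_mul ((L.analyticOnNhd_derivWeierstrassP x hx).fun_sub analyticAt_const)
  have hmer : Meromorphic ℘'[L] := L.meromorphic_derivWeierstrassP
  refine eq_of_meromorphicOrderAt_nonneg_of_periodic (Λ := L.lattice)
    (f := fun v ↦ (℘'[L] (v + c) - ℘'[L] c) * (℘'[L] v - ℘'[L] (-c)))
    (fun x ↦ ?_) (fun x l hl ↦ ?_)
    (meromorphicOrderAt_derivWeierstrassP_add_sub_mul_sub_nonneg hg₂ hc h0)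
    (han hz hzc) (han hw hwc)
  · exact ((meromorphicAt_fun_comp_add_const_iff_meromorphicAt.2 (hmer (x + c))).fun_sub
      (.const _ _)).fun_mul ((hmer x).fun_sub (.const _ _))
  · have hper (v : ℂ) : ℘'[L] (v + l) = ℘'[L] v := L.derivWeierstrassP_add_coe v ⟨l, hl⟩
    simp only [add_right_comm x l c, hper]

theorem derivWeierstrassP_eq_three_mul (hg₂ : L.g₂ = 0) {z : ℂ} (h0 : ℘[L] (2 * z) = 0)
    (h2z : 2 * z ∉ L.lattice) (h3z : 3 * z ∉ L.lattice) (h6z : 6 * z ∈ L.lattice) :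
    ℘'[L] z = 3 * ℘'[L] (2 * z) := by
  have hz : z ∉ L.lattice := fun h ↦ h2z (by simpa [two_mul] using add_mem h h)
  have h4z : 2 * z + 2 * z ∉ L.lattice := fun h ↦ h2z (by convert sub_mem h6z h using 1; ring)
  have hhalf : ℘'[L] (z + 2 * z) = 0 :=
    derivWeierstrassP_eq_zero_of_two_mul_mem (by convert h6z using 1; ring)
  have hthird : ℘'[L] (2 * z + 2 * z) = -℘'[L] (2 * z) := by
    rw [← two_mul]
    exact derivWeierstrassP_two_mul_of_three_mul_mem (by convert h6z using 1; ring)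
  have hkey := derivWeierstrassP_add_sub_mul_sub_eq hg₂ h2z h0 hz
    (by rwa [show z + 2 * z = 3 * z by ring]) h2z h4z
  rw [hhalf, hthird, L.derivWeierstrassP_neg] at hkey
  refine mul_left_cancel₀ (derivWeierstrassP_ne_zero_of_weierstrassP_eq_zero hg₂ h2z h0) ?_
  linear_combination -hkey

section Homogeneity

variable {L' : PeriodPair} {u : ℂ}

theorem weierstrassP_mul_of_lattice (hu : u ≠ 0)
    (h : ∀ l, u * l ∈ L'.lattice ↔ l ∈ L.lattice) (z : ℂ) :
    ℘[L'] (u * z) = ℘[L] z / u ^ 2 := by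
  obtain ⟨e, he⟩ : ∃ e : L.lattice ≃ L'.lattice, ∀ l, (e l : ℂ) = u * l :=
    ⟨(Equiv.mulLeft₀ u hu).subtypeEquiv fun l ↦ (h l).symm, fun _ ↦ rfl⟩
  simp only [PeriodPair.weierstrassP, ← e.tsum_eq, ← tsum_div_const, he, ← mul_sub, mul_pow,
    div_mul_eq_div_div_swap, sub_div]

theorem G_eq_div_of_lattice (hu : u ≠ 0) (h : ∀ l, u * l ∈ L'.lattice ↔ l ∈ L.lattice) (n : ℕ) :
    L'.G n = L.G n / u ^ n := by
  obtain ⟨e, he⟩ : ∃ e : L.lattice ≃ L'.lattice, ∀ l, (e l : ℂ) = u * l :=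
    ⟨(Equiv.mulLeft₀ u hu).subtypeEquiv fun l ↦ (h l).symm, fun _ ↦ rfl⟩
  simp only [PeriodPair.G, ← e.tsum_eq, he, mul_pow, mul_inv_rev, tsum_mul_right, div_eq_mul_inv]

end Homogeneity

section Conj

variable {L' : PeriodPair}

theorem weierstrassP_conj_of_lattice (h : ∀ l, conj l ∈ L'.lattice ↔ l ∈ L.lattice) (z : ℂ) :
    ℘[L'] (conj z) = conj (℘[L] z) := by
  simp only [PeriodPair.weierstrassP, Complex.conj_tsum]
  rw [← (Complex.conjAe.toEquiv.subtypeEquiv fun l ↦ (h l).symm).tsum_eq]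
  refine tsum_congr fun l ↦ ?_
  simp

theorem derivWeierstrassP_conj_of_lattice (h : ∀ l, conj l ∈ L'.lattice ↔ l ∈ L.lattice) (z : ℂ) :
    ℘'[L'] (conj z) = conj (℘'[L] z) := by
  have hconj : ℘[L] = conj ∘ ℘[L'] ∘ conj :=
    funext fun w ↦ by simp [weierstrassP_conj_of_lattice h]
  rw [← L.deriv_weierstrassP, ← L'.deriv_weierstrassP, hconj, deriv_conj_conj]
  simp

end Conj

theorem im_weierstrassP_eq_zero_of_re_eq_zero (hL : ∀ l, conj l ∈ L.lattice ↔ l ∈ L.lattice)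
    {z : ℂ} (hz : z.re = 0) : (℘[L] z).im = 0 := by
  have hneg : conj z = -z := Complex.ext (by simp [hz]) (by simp)
  rw [← Complex.conj_eq_iff_im, ← weierstrassP_conj_of_lattice hL, hneg, L.weierstrassP_neg]

theorem re_derivWeierstrassP_eq_zero_of_re_eq_zero (hL : ∀ l, conj l ∈ L.lattice ↔ l ∈ L.lattice)
    {z : ℂ} (hz : z.re = 0) : (℘'[L] z).re = 0 := by
  have hneg : conj z = -z := Complex.ext (by simp [hz]) (by simp)
  have h := derivWeierstrassP_conj_of_lattice hL z
  rw [hneg, L.derivWeierstrassP_neg] at h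
  simpa [self_eq_neg, eq_comm] using congrArg Complex.re h

theorem monotoneOn_im_derivWeierstrassP_I_mul (hL : ∀ l, conj l ∈ L.lattice ↔ l ∈ L.lattice)
    (hg₂ : L.g₂ = 0) {s : Set ℝ} (hs : Convex ℝ s) (hsL : ∀ t ∈ s, I * (t : ℂ) ∉ L.lattice) :
    MonotoneOn (fun t : ℝ ↦ (℘'[L] (I * t)).im) s := by
  have hderiv (t : ℝ) (ht : t ∈ s) :
      HasDerivAt (fun t : ℝ ↦ (℘'[L] (I * t)).im) (6 * (℘[L] (I * t)).re ^ 2) t := by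
    have haxis : HasDerivAt (fun w : ℂ ↦ I * w) I t := by
      simpa using (hasDerivAt_id (t : ℂ)).const_mul I
    have him := Complex.imCLM.hasFDerivAt.comp_hasDerivAt t
      ((hasDerivAt_derivWeierstrassP (hsL t ht)).comp (t : ℂ) haxis).comp_ofReal
    have hreal : (℘[L] (I * t)).im = 0 := im_weierstrassP_eq_zero_of_re_eq_zero hL (by simp)
    refine him.congr_deriv ?_
    simp [hg₂, pow_two, hreal]
  refine monotoneOn_of_deriv_nonneg hs (fun t ht ↦ (hderiv t ht).continuousAt.continuousWithinAt)
    (fun t ht ↦ (hderiv t (interior_subset ht)).differentiableAt.differentiableWithinAt)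
    fun t ht ↦ ?_
  rw [(hderiv t (interior_subset ht)).deriv]
  positivity

end PeriodPair

section Eisenstein

theorem tau_sq : tau ^ 2 = -1 - tau := by
  have h3 : ((√3 : ℝ) : ℂ) ^ 2 = 3 := by
    rw [← Complex.ofReal_pow, Real.sq_sqrt (by norm_num), Complex.ofReal_ofNat]
  rw [tau]
  linear_combination (1 / 4) * h3 * I ^ 2 + (3 / 4) * Complex.I_sq

theorem tau_cube : tau ^ 3 = 1 := by
  linear_combination (tau - 1) * tau_sq

theorem tau_ne_zero : tau ≠ 0 := fun h ↦ by simpa [h] using tau_cube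

theorem tau_re : tau.re = -1 / 2 := by simp [tau]

theorem tau_im : tau.im = √3 / 2 := by simp [tau]

theorem tau_ne_one : tau ≠ 1 := fun h ↦ by
  have hre := congrArg Complex.re h
  norm_num [tau_re] at hre

theorem conj_tau : conj tau = -1 - tau := by
  refine Complex.ext ?_ ?_
  · norm_num [tau_re]
  · simp

theorem sqrtm3_eq : sqrtm3 = 1 + 2 * tau := by
  rw [sqrtm3, tau]
  ring

theorem mem_Eis_iff {z : ℂ} : z ∈ Eis ↔ ∃ m n : ℤ, z = m + n * tau := by
  constructor
  · intro hz
    induction hz using Subring.closure_induction with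
    | mem x hx => exact ⟨0, 1, by simpa using hx⟩
    | zero => exact ⟨0, 0, by simp⟩
    | one => exact ⟨1, 0, by simp⟩
    | add x y _ _ hx hy =>
      obtain ⟨a, b, rfl⟩ := hx
      obtain ⟨c, d, rfl⟩ := hy
      exact ⟨a + c, b + d, by push_cast; ring⟩
    | neg x _ hx =>
      obtain ⟨a, b, rfl⟩ := hx
      exact ⟨-a, -b, by push_cast; ring⟩
    | mul x y _ _ hx hy =>
      obtain ⟨a, b, rfl⟩ := hx
      obtain ⟨c, d, rfl⟩ := hy
      refine ⟨a * c - b * d, a * d + b * c - b * d, ?_⟩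
      push_cast
      linear_combination (b * d : ℂ) * tau_sq
  · rintro ⟨m, n, rfl⟩
    exact add_mem (intCast_mem _ _) (mul_mem (intCast_mem _ _) (Subring.subset_closure rfl))

/-- The lattice `ω·ℤ[τ]`, for `ω ≠ 0`, as a period pair with periods `ω` and `ωτ`. -/
def eisPeriodPair (ω : ℝ) (hω : ω ≠ 0) : PeriodPair where
  ω₁ := ω
  ω₂ := ω * tau
  indep := by
    rw [LinearIndependent.pair_iff]
    intro s t h
    have hre := congrArg Complex.re h
    have him := congrArg Complex.im h
    obtain rfl : t = 0 := by simpa [tau_im, hω] using him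
    exact ⟨by simpa [hω] using hre, rfl⟩

variable {ω : ℝ} {hω : ω ≠ 0}

theorem mem_lattice_eisPeriodPair {z : ℂ} :
    z ∈ (eisPeriodPair ω hω).lattice ↔ ∃ m n : ℤ, z = ω * (m + n * tau) := by
  simp only [PeriodPair.mem_lattice, eisPeriodPair, mul_add, mul_left_comm (ω : ℂ),
    mul_comm (ω : ℂ) (Int.cast _), eq_comm (a := z)]

variable (hω) in
theorem inLattice_iff_mem_lattice {z : ℂ} : inLattice ω z ↔ z ∈ (eisPeriodPair ω hω).lattice := by
  simp [inLattice, mem_lattice_eisPeriodPair, mem_Eis_iff]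

variable (hω) in
theorem wp_eq_weierstrassP : wp ω = ℘[eisPeriodPair ω hω] := by
  ext z
  let incl (a : {w : ℂ // inLattice ω w ∧ w ≠ 0}) : (eisPeriodPair ω hω).lattice :=
    ⟨a, (inLattice_iff_mem_lattice hω).1 a.2.1⟩
  have hincl : Function.Injective incl := fun _ _ hab ↦
    Subtype.ext (congrArg ((↑) : (eisPeriodPair ω hω).lattice → ℂ) hab)
  have htsum := hincl.tsum_eq (f := fun l : (eisPeriodPair ω hω).lattice ↦
    if (l : ℂ) = (0 : (eisPeriodPair ω hω).lattice) then (0 : ℂ)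
    else 1 / (z - l) ^ 2 - 1 / (l : ℂ) ^ 2) fun l hl ↦
      ⟨⟨l, (inLattice_iff_mem_lattice hω).2 l.2, fun h0 ↦ hl (if_pos h0)⟩, rfl⟩
  rw [← PeriodPair.weierstrassPExcept_add _ 0 z, PeriodPair.weierstrassPExcept, ← htsum, wp,
    add_comm]
  congr 1
  · exact tsum_congr fun a ↦ by simp [incl, a.2.2]
  · simp

theorem conj_mem_lattice_eisPeriodPair {z : ℂ} :
    conj z ∈ (eisPeriodPair ω hω).lattice ↔ z ∈ (eisPeriodPair ω hω).lattice := by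
  have hconj : ∀ {w}, w ∈ (eisPeriodPair ω hω).lattice →
      conj w ∈ (eisPeriodPair ω hω).lattice := fun {w} hw ↦ by
    obtain ⟨m, n, rfl⟩ := mem_lattice_eisPeriodPair.1 hw
    refine mem_lattice_eisPeriodPair.2 ⟨m - n, -n, ?_⟩
    simp only [map_mul, map_add, Complex.conj_ofReal, map_intCast, conj_tau]
    push_cast
    ring
  exact ⟨fun h ↦ by simpa using hconj h, hconj⟩

theorem tau_mul_mem_lattice_eisPeriodPair {z : ℂ} :
    tau * z ∈ (eisPeriodPair ω hω).lattice ↔ z ∈ (eisPeriodPair ω hω).lattice := by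
  have hmul : ∀ {w}, w ∈ (eisPeriodPair ω hω).lattice →
      tau * w ∈ (eisPeriodPair ω hω).lattice := fun {w} hw ↦ by
    obtain ⟨m, n, rfl⟩ := mem_lattice_eisPeriodPair.1 hw
    refine mem_lattice_eisPeriodPair.2 ⟨-n, m - n, ?_⟩
    push_cast
    linear_combination (ω * n : ℂ) * tau_sq
  refine ⟨fun h ↦ ?_, hmul⟩
  simpa [show tau * (tau * (tau * z)) = z by linear_combination z * tau_cube] using hmul (hmul h)

theorem I_mul_notMem_lattice_eisPeriodPair {t : ℝ} (ht : t ∈ Ioo 0 (√3 * ω)) :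
    I * (t : ℂ) ∉ (eisPeriodPair ω hω).lattice := by
  intro hmem
  obtain ⟨m, n, h⟩ := mem_lattice_eisPeriodPair.1 hmem
  have hre : (n : ℝ) = 2 * m := by
    have hre' : (m : ℝ) - n * (1 / 2) = 0 := by
      simpa [hω, tau_re, neg_div, sub_eq_add_neg] using congrArg Complex.re h
    linear_combination -2 * hre'
  have him : t = √3 * ω * m := by
    have him' : t = ω * (n * (√3 / 2)) := by simpa [tau_im] using congrArg Complex.im h
    rw [him', hre]
    ring
  have hpos : 0 < √3 * ω := ht.1.trans ht.2
  rw [him] at ht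
  have hm_pos : 0 < m := by exact_mod_cast (mul_pos_iff_of_pos_left hpos).1 ht.1
  have hm_lt : m < 1 := by exact_mod_cast (mul_lt_iff_lt_one_right hpos).1 ht.2
  omega

theorem sqrtm3_mul_mem_lattice_eisPeriodPair : sqrtm3 * ω ∈ (eisPeriodPair ω hω).lattice :=
  mem_lattice_eisPeriodPair.2 ⟨1, 2, by rw [sqrtm3_eq]; push_cast; ring⟩

theorem sqrtm3_mul_div_three_notMem_lattice_eisPeriodPair (hpos : 0 < ω) :
    sqrtm3 * ω / 3 ∉ (eisPeriodPair ω hω).lattice := by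
  rw [show sqrtm3 * ω / 3 = I * (√3 * ω / 3 : ℝ) by rw [sqrtm3]; push_cast; ring]
  exact I_mul_notMem_lattice_eisPeriodPair
    ⟨by positivity, div_lt_self (by positivity) (by norm_num)⟩

theorem g₂_eisPeriodPair : (eisPeriodPair ω hω).g₂ = 0 := by
  have hG := G_eq_div_of_lattice tau_ne_zero
    (fun l ↦ tau_mul_mem_lattice_eisPeriodPair (hω := hω) (z := l)) 4
  rw [show tau ^ 4 = tau by linear_combination tau * tau_cube, eq_div_iff tau_ne_zero,
    mul_right_eq_self₀, or_iff_right tau_ne_one] at hG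
  rw [PeriodPair.g₂, hG, mul_zero]

theorem weierstrassP_eisPeriodPair_sqrtm3_mul_div_three :
    ℘[eisPeriodPair ω hω] (sqrtm3 * ω / 3) = 0 := by
  have hmem : (ω * (-1 - tau) : ℂ) ∈ (eisPeriodPair ω hω).lattice :=
    mem_lattice_eisPeriodPair.2 ⟨-1, -1, by push_cast; ring⟩
  have htau : tau * (sqrtm3 * ω / 3) = sqrtm3 * ω / 3 + ω * (-1 - tau) := by
    rw [sqrtm3_eq]
    linear_combination (2 / 3 * ω : ℂ) * tau_sq
  have h := weierstrassP_mul_of_lattice tau_ne_zero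
    (fun l ↦ tau_mul_mem_lattice_eisPeriodPair (hω := hω) (z := l)) (sqrtm3 * ω / 3)
  rw [htau, PeriodPair.weierstrassP_add_coe _ _ ⟨_, hmem⟩,
    eq_div_iff (pow_ne_zero 2 tau_ne_zero), mul_right_eq_self₀] at h
  refine h.resolve_left fun h1 ↦ tau_ne_one ?_
  linear_combination tau_cube - tau * h1

theorem derivWeierstrassP_eisPeriodPair_sqrtm3_mul_div_six (hpos : 0 < ω) :
    ℘'[eisPeriodPair ω hω] (sqrtm3 * ω / 6) = 3 * ℘'[eisPeriodPair ω hω] (sqrtm3 * ω / 3) := by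
  have hthird : 2 * (sqrtm3 * ω / 6) = sqrtm3 * ω / 3 := by ring
  have hperiod : 6 * (sqrtm3 * ω / 6) = sqrtm3 * ω := by ring
  rw [← hthird]
  refine derivWeierstrassP_eq_three_mul g₂_eisPeriodPair ?_ ?_ ?_ ?_
  · rw [hthird]
    exact weierstrassP_eisPeriodPair_sqrtm3_mul_div_three
  · rw [hthird]
    exact sqrtm3_mul_div_three_notMem_lattice_eisPeriodPair hpos
  · rw [show 3 * (sqrtm3 * ω / 6) = I * (√3 * ω / 2 : ℝ) by rw [sqrtm3]; push_cast; ring]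
    exact I_mul_notMem_lattice_eisPeriodPair ⟨by positivity, half_lt_self (by positivity)⟩
  · rw [hperiod]
    exact sqrtm3_mul_mem_lattice_eisPeriodPair

theorem im_derivWeierstrassP_eisPeriodPair_sqrtm3_mul_div_three_nonpos (hpos : 0 < ω) :
    (℘'[eisPeriodPair ω hω] (sqrtm3 * ω / 3)).im ≤ 0 := by
  have hperiod : 0 < √3 * ω := by positivity
  have hmono := monotoneOn_im_derivWeierstrassP_I_mul
    (fun l ↦ conj_mem_lattice_eisPeriodPair (hω := hω) (z := l)) g₂_eisPeriodPair
    (convex_Ioo 0 (√3 * ω)) fun t ht ↦ I_mul_notMem_lattice_eisPeriodPair ht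
  have hhalf : ℘'[eisPeriodPair ω hω] (I * (√3 * ω / 2 : ℝ)) = 0 := by
    refine derivWeierstrassP_eq_zero_of_two_mul_mem ?_
    convert sqrtm3_mul_mem_lattice_eisPeriodPair using 1
    rw [sqrtm3]
    push_cast
    ring
  calc (℘'[eisPeriodPair ω hω] (sqrtm3 * ω / 3)).im
      = (℘'[eisPeriodPair ω hω] (I * (√3 * ω / 3 : ℝ))).im := by
        rw [sqrtm3]
        push_cast
        ring_nf
    _ ≤ (℘'[eisPeriodPair ω hω] (I * (√3 * ω / 2 : ℝ))).im :=
        hmono ⟨by positivity, by linarith⟩ ⟨by positivity, by linarith⟩ (by linarith)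
    _ = 0 := by rw [hhalf, Complex.zero_im]

end Eisenstein

theorem wp_deriv_value_at_sqrt_point_general
    (ω : ℝ) (hω : 0 < ω) (g : ℝ)
    (hODE : ∀ z : ℂ, ¬ inLattice ω z → deriv (wp ω) z ^ 2 = 4 * wp ω z ^ 3 - g) :
    deriv (wp ω) (sqrtm3 * (ω : ℂ) / 6) = -3 * √g * Complex.I := by
  set β := ℘'[eisPeriodPair ω hω.ne'] (sqrtm3 * ω / 3) with hβ
  have hre : β.re = 0 := re_derivWeierstrassP_eq_zero_of_re_eq_zero
    (fun l ↦ conj_mem_lattice_eisPeriodPair) (by simp [sqrtm3])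
  have him : β.im ≤ 0 := im_derivWeierstrassP_eisPeriodPair_sqrtm3_mul_div_three_nonpos hω
  have hsq : β ^ 2 = -g := by
    have h := hODE (sqrtm3 * ω / 3) <| (inLattice_iff_mem_lattice hω.ne').not.2
      (sqrtm3_mul_div_three_notMem_lattice_eisPeriodPair hω)
    simpa [wp_eq_weierstrassP hω.ne', weierstrassP_eisPeriodPair_sqrtm3_mul_div_three] using h
  have hβI : β = β.im * I := Complex.ext (by simp [hre]) (by simp)
  have hg : g = (-β.im) ^ 2 := by
    rw [hβI, mul_pow, I_sq] at hsq
    exact_mod_cast (by linear_combination hsq : (g : ℂ) = (-β.im) ^ 2)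
  rw [wp_eq_weierstrassP hω.ne', PeriodPair.deriv_weierstrassP,
    derivWeierstrassP_eisPeriodPair_sqrtm3_mul_div_six hω, ← hβ, hg,
    Real.sqrt_sq (neg_nonneg.2 him)]
  nth_rw 1 [hβI]
  push_cast
  ring

/-- From [Qiu], (2.15): `℘′(√−3·ω/6) = −3√−1`, with `√−3 = 1 + 2τ` the square root of `−3` with positive imaginary part.
Here `ω > 0` is pinned down by the differential equation `℘′² = 4℘³ − 1` for the
lattice `L_ω = ω·ℤ[τ]` (equivalently, the lattice invariants are `g₂ = 0`, `g₃ = 1`). -/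
theorem wp_deriv_value_at_sqrt_point
    (ω : ℝ) (hω : 0 < ω)
    (hODE : ∀ z : ℂ, ¬ inLattice ω z → deriv (wp ω) z ^ 2 = 4 * wp ω z ^ 3 - 1) :
    deriv (wp ω) (sqrtm3 * (ω : ℂ) / 6) = -3 * Complex.I := by
  simpa using wp_deriv_value_at_sqrt_point_general ω hω 1 (by simpa using hODE)
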